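/- Let λ > 0 and β ∈ (0,1]. For every ε > 0 there exist constants C_ε > 0 and σ_ε > 0 such that for all n ∈ ℕ₀ and all x ∈ ℝ, |C_n^{λ,β}(x)| ≤ C_ε · n! · σ_ε^{−n} · e^{ε|x|}. -/

import Mathlib

/-!
The Cauchy estimate on a circle of radius `σ` turns a bound for the generating function into a bound
for `C_n`, with the factor `n! σ⁻ⁿ`. Since `log (1 + z)` vanishes at `0`, on a small enough circle
the exponential factor is at most `e^{ε|x|}`, and `1 / E_β(λz)` is bounded near `0`: the
coefficients of `E_β` are at most `2` because `Γ ≥ 1/2` on `[1, ∞)`, so `E_β` is analytic at `0`,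
where its value is `1`.
-/

open MeasureTheory Finset
open scoped ENNReal NNReal

noncomputable section

/-- The complex Mittag-Leffler function `E_β(z) = ∑ zⁿ / Γ(βn+1)`. -/
def mittagLeffler (β : ℝ) (z : ℂ) : ℂ :=
  ∑' n : ℕ, z ^ n / (Complex.Gamma ((β * n + 1 : ℝ) : ℂ))

/-- The real Mittag-Leffler function `E_β(x) = ∑ xⁿ / Γ(βn+1)`. -/
def mittagLefflerR (β : ℝ) (x : ℝ) : ℝ :=
  ∑' n : ℕ, x ^ n / Real.Gamma (β * n + 1)

/-- The fractional Poisson measure `π_{λ,β} = ∑_k (λᵏ/k!) E_β⁽ᵏ⁾(-λ) δ_k` on `ℝ`. -/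
def fracPoisson (lam β : ℝ) : Measure ℝ :=
  Measure.sum fun k : ℕ =>
    ENNReal.ofReal (lam ^ k / k.factorial * iteratedDeriv k (mittagLefflerR β) (-lam)) •
      Measure.dirac (k : ℝ)

/-- The Poisson measure with rate `μ` on `ℝ`, `π_μ({k}) = (μᵏ/k!) e^{-μ}`. -/
def poissonMeasureR (μ : ℝ) : Measure ℝ :=
  Measure.sum fun k : ℕ =>
    ENNReal.ofReal (μ ^ k / k.factorial * Real.exp (-μ)) • Measure.dirac (k : ℝ)

/-- The generalized Appell polynomials
`C_n^{λ,β}(x) = dⁿ/dzⁿ [e^{x log(1+z)} / E_β(λz)]` at `z = 0`. -/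
def genAppell (lam β : ℝ) (n : ℕ) (x : ℂ) : ℂ :=
  iteratedDeriv n
    (fun z : ℂ => Complex.exp (x * Complex.log (1 + z)) / mittagLeffler β (lam * z)) 0

/-- The Appell polynomials `A_n^{λ,β}(x) = dⁿ/dzⁿ [e^{zx} / E_β(λ(eᶻ-1))]` at `z = 0`. -/
def appell (lam β : ℝ) (n : ℕ) (x : ℂ) : ℂ :=
  iteratedDeriv n
    (fun z : ℂ => Complex.exp (z * x) / mittagLeffler β (lam * (Complex.exp z - 1))) 0

/-- Stirling numbers of the first kind, via `(log(1+z))^k = k! ∑_{n≥k} s(n,k) zⁿ/n!`. -/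
def stirlingFst (n k : ℕ) : ℝ :=
  iteratedDeriv n (fun x : ℝ => (Real.log (1 + x)) ^ k) 0 / k.factorial

/-- Stirling numbers of the second kind, via `(eᶻ-1)^k = k! ∑_{n≥k} S(n,k) zⁿ/n!`. -/
def stirlingSnd (n k : ℕ) : ℝ :=
  iteratedDeriv n (fun x : ℝ => (Real.exp x - 1) ^ k) 0 / k.factorial

/-- The `n`-th moment of the fractional Poisson measure. -/
def fpMoment (lam β : ℝ) (n : ℕ) : ℝ := ∫ x, x ^ n ∂(fracPoisson lam β)

/-- `M̃_{λ,β}(m) = m! λᵐ / Γ(mβ+1)`. -/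
def tildeM (lam β : ℝ) (m : ℕ) : ℝ := m.factorial * lam ^ m / Real.Gamma (m * β + 1)

/-- The (partial exponential) Bell polynomials `B_{n,k}(x₁, …, x_{n-k+1})`. -/
def bellPoly (n k : ℕ) (x : ℕ → ℂ) : ℂ :=
  ∑ j ∈ (Fintype.piFinset fun _ : Fin (n - k + 1) => Finset.range (n + 1)).filter
      (fun j => (∑ i, j i) = k ∧ (∑ i, (i.1 + 1) * j i) = n),
    (n.factorial : ℂ) / (∏ i, ((j i).factorial : ℂ)) *
      ∏ i, (x (i.1 + 1) / ((i.1 + 1).factorial : ℂ)) ^ j i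

section PowerSeries

variable {𝕜 E : Type*} [NontriviallyNormedField 𝕜] [NormedRing E] [NormedAlgebra 𝕜 E]
  [NormOneClass E] [CompleteSpace E]

lemma analyticAt_ofScalarsSum_of_norm_mul_pow_le {a : ℕ → 𝕜} {r : ℝ≥0} {C : ℝ} (hr : 0 < r)
    (ha : ∀ n, ‖a n‖ * (r : ℝ) ^ n ≤ C) :
    AnalyticAt 𝕜 (FormalMultilinearSeries.ofScalarsSum (E := E) a) 0 := by
  have hradius : (r : ℝ≥0∞) ≤ (FormalMultilinearSeries.ofScalars E a).radius :=
    FormalMultilinearSeries.le_radius_of_bound _ C fun n => by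
      simpa only [FormalMultilinearSeries.ofScalars_norm] using ha n
  exact (FormalMultilinearSeries.hasFPowerSeriesOnBall _
    ((ENNReal.coe_pos.2 hr).trans_le hradius)).analyticAt

end PowerSeries

lemma one_half_le_Gamma_of_one_le {s : ℝ} (hs : 1 ≤ s) : 1 / 2 ≤ Real.Gamma s := by
  have one_le_Gamma {t : ℝ} (ht : 2 ≤ t) : 1 ≤ Real.Gamma t :=
    Real.Gamma_two ▸ Real.Gamma_strictMonoOn_Ici.monotoneOn Set.self_mem_Ici ht ht
  rcases le_total s 2 with hs2 | hs2
  · have hrec : 1 ≤ s * Real.Gamma s := by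
      rw [← Real.Gamma_add_one (by positivity)]
      exact one_le_Gamma (by linarith)
    have : s * Real.Gamma s ≤ 2 * Real.Gamma s :=
      mul_le_mul_of_nonneg_right hs2 (Real.Gamma_nonneg_of_nonneg (by positivity))
    linarith
  · linarith [one_le_Gamma hs2]

lemma norm_inv_Gamma_ofReal_le_two {s : ℝ} (hs : 1 ≤ s) : ‖(Complex.Gamma (s : ℂ))⁻¹‖ ≤ 2 := by
  have hΓ := one_half_le_Gamma_of_one_le hs
  rw [Complex.Gamma_ofReal, norm_inv, Complex.norm_of_nonneg (by linarith)]
  exact inv_le_of_inv_le₀ two_pos (by linarith)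

lemma mittagLeffler_eq_ofScalarsSum (β : ℝ) :
    mittagLeffler β = FormalMultilinearSeries.ofScalarsSum
      fun n : ℕ => (Complex.Gamma ((β * n + 1 : ℝ) : ℂ))⁻¹ := by
  funext z
  simp only [FormalMultilinearSeries.ofScalarsSum_eq_tsum, mittagLeffler, smul_eq_mul,
    div_eq_inv_mul]

lemma mittagLeffler_zero (β : ℝ) : mittagLeffler β 0 = 1 := by
  simp [mittagLeffler_eq_ofScalarsSum]

lemma analyticAt_mittagLeffler_zero {β : ℝ} (hβ : 0 ≤ β) : AnalyticAt ℂ (mittagLeffler β) 0 := by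
  rw [mittagLeffler_eq_ofScalarsSum]
  refine analyticAt_ofScalarsSum_of_norm_mul_pow_le (r := 1) (C := 2) one_pos fun n => ?_
  have hs : 1 ≤ β * n + 1 := le_add_of_nonneg_left (by positivity)
  simpa using norm_inv_Gamma_ofReal_le_two hs

lemma analyticAt_inv_mittagLeffler_mul {β : ℝ} (hβ : 0 ≤ β) (a : ℂ) :
    AnalyticAt ℂ (fun z => (mittagLeffler β (a * z))⁻¹) 0 := by
  have hE : AnalyticAt ℂ (fun z => mittagLeffler β (a * z)) 0 :=
    AnalyticAt.fun_comp_of_eq (analyticAt_mittagLeffler_zero hβ) (by fun_prop) (mul_zero a)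
  exact hE.inv (by simp [mittagLeffler_zero])

section GeneratingFunction

lemma analyticAt_log_one_add_zero : AnalyticAt ℂ (fun z => Complex.log (1 + z)) 0 :=
  AnalyticAt.clog (by fun_prop) (by simp)

lemma norm_cexp_mul_le {x w : ℂ} {ε : ℝ} (hw : ‖w‖ ≤ ε) :
    ‖Complex.exp (x * w)‖ ≤ Real.exp (ε * ‖x‖) := by
  refine (Complex.norm_exp_le_exp_norm _).trans (Real.exp_le_exp.2 ?_)
  rw [norm_mul, mul_comm]
  gcongr

variable {F : Type*} [NormedAddCommGroup F] [NormedSpace ℂ F] [CompleteSpace F]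

theorem exists_norm_iteratedDeriv_cexp_smul_le {A : ℂ → F} {B : ℂ → ℂ} {c : ℂ}
    (hA : AnalyticAt ℂ A c) (hB : AnalyticAt ℂ B c) (hBc : B c = 0) {ε : ℝ} (hε : 0 < ε) :
    ∃ C σ : ℝ, 0 < C ∧ 0 < σ ∧ ∀ (n : ℕ) (x : ℂ),
      ‖iteratedDeriv n (fun z => Complex.exp (x * B z) • A z) c‖ ≤
        C * n.factorial * σ⁻¹ ^ n * Real.exp (ε * ‖x‖) := by
  have hA_bdd : ∀ᶠ z in nhds c, ‖A z‖ < ‖A c‖ + 1 :=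
    hA.continuousAt.norm.eventually_lt_const (lt_add_one _)
  have hB_small : ∀ᶠ z in nhds c, ‖B z‖ < ε :=
    hB.continuousAt.norm.eventually_lt_const (by simpa [hBc] using hε)
  obtain ⟨σ, hσ, hball⟩ := Metric.nhds_basis_closedBall.eventually_iff.1
    (hA.eventually_analyticAt.and (hB.eventually_analyticAt.and (hA_bdd.and hB_small)))
  refine ⟨‖A c‖ + 1, σ, by positivity, hσ, fun n x => ?_⟩
  have hdiff : DifferentiableOn ℂ (fun z => Complex.exp (x * B z) • A z)
      (Metric.closedBall c σ) := fun z hz => by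
    obtain ⟨hAz, hBz, -, -⟩ := hball hz
    exact ((hBz.differentiableAt.const_mul x).cexp.smul
      hAz.differentiableAt).differentiableWithinAt
  have hbound : ∀ z ∈ Metric.sphere c σ,
      ‖Complex.exp (x * B z) • A z‖ ≤ Real.exp (ε * ‖x‖) * (‖A c‖ + 1) := fun z hz => by
    obtain ⟨-, -, hAz, hBz⟩ := hball (Metric.sphere_subset_closedBall hz)
    rw [norm_smul]
    exact mul_le_mul (norm_cexp_mul_le hBz.le) hAz.le (norm_nonneg _) (Real.exp_nonneg _)
  calc ‖iteratedDeriv n (fun z => Complex.exp (x * B z) • A z) c‖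
      ≤ n.factorial * (Real.exp (ε * ‖x‖) * (‖A c‖ + 1)) / σ ^ n :=
        Complex.norm_iteratedDeriv_le_of_forall_mem_sphere_norm_le n hσ
          (hdiff.diffContOnCl_ball subset_rfl) hbound
    _ = (‖A c‖ + 1) * n.factorial * σ⁻¹ ^ n * Real.exp (ε * ‖x‖) := by
        rw [inv_pow]
        ring

end GeneratingFunction

theorem stmt9_general (lam : ℝ) {β : ℝ} (hβ : 0 ≤ β) {ε : ℝ} (hε : 0 < ε) :
    ∃ C σ : ℝ, 0 < C ∧ 0 < σ ∧ ∀ (n : ℕ) (x : ℂ),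
      ‖genAppell lam β n x‖ ≤ C * n.factorial * σ⁻¹ ^ n * Real.exp (ε * ‖x‖) := by
  simpa only [genAppell, div_eq_mul_inv, smul_eq_mul] using
    exists_norm_iteratedDeriv_cexp_smul_le (analyticAt_inv_mittagLeffler_mul hβ lam)
      analyticAt_log_one_add_zero (by simp) hε

theorem stmt9 (lam β : ℝ) (hlam : 0 < lam) (hβ0 : 0 < β) (hβ1 : β ≤ 1)
    (ε : ℝ) (hε : 0 < ε) :
    ∃ C σ : ℝ, 0 < C ∧ 0 < σ ∧ ∀ (n : ℕ) (x : ℝ),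
      ‖genAppell lam β n x‖ ≤ C * n.factorial * σ⁻¹ ^ n * Real.exp (ε * |x|) := by
  obtain ⟨C, σ, hC, hσ, h⟩ := stmt9_general lam hβ0.le hε
  exact ⟨C, σ, hC, hσ, fun n x => by simpa using h n x⟩
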